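/- For the logistic growth map f(x) = x + 0.5x(1 − x) − 0.2x = 1.3x − 0.5x², f maps the interval [0.1, 1] into [0.1, 0.845], and in particular every trajectory starting in [0.1, 0.3] stays in [0.1, 0.7) for all k ≥ 0, never entering the unsafe set [0.7, 1]. -/

import Mathlib

/-!
Write `f x = 1.3 x - 0.5 x²`. The upper bound is the vertex value: `0.845 - f x = 0.5 (x - 1.3)²`.
For the lower bound, `f x - 0.1 = 0.5 (x - 0.1) (1 - x) + (0.75 x - 0.05)`, which is nonnegative on
`[0.1, 1]`. For safety, `0.6` is a fixed point of `f`, with `0.6 - f x = 0.5 (0.6 - x) (2 - x)`, so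
`[0.1, 0.6]` is a forward-invariant interval that contains `[0.1, 0.3]` and misses `[0.7, 1]`.
-/

/-- The logistic growth map maps `[0.1, 1]` into `[0.1, 0.845]`, and trajectories
starting in `[0.1, 0.3]` stay in `[0.1, 0.7)`, never entering `[0.7, 1]`. -/
theorem logistic_growth_safety :
    (∀ x ∈ Set.Icc (0.1 : ℝ) 1,
      (1.3 * x - 0.5 * x ^ 2) ∈ Set.Icc (0.1 : ℝ) 0.845) ∧
    (∀ x0 ∈ Set.Icc (0.1 : ℝ) 0.3, ∀ k : ℕ,
      (fun x : ℝ => 1.3 * x - 0.5 * x ^ 2)^[k] x0 ∈ Set.Ico (0.1 : ℝ) 0.7 ∧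
      (fun x : ℝ => 1.3 * x - 0.5 * x ^ 2)^[k] x0 ∉ Set.Icc (0.7 : ℝ) 1) := by
  have hmaps : ∀ x ∈ Set.Icc (0.1 : ℝ) 1,
      (1.3 * x - 0.5 * x ^ 2) ∈ Set.Icc (0.1 : ℝ) 0.845 := by
    rintro x ⟨h1, h2⟩
    constructor
    · nlinarith [mul_nonneg (sub_nonneg.2 h1) (sub_nonneg.2 h2)]
    · nlinarith [sq_nonneg (x - 1.3)]
  have hinv : Set.MapsTo (fun x : ℝ => 1.3 * x - 0.5 * x ^ 2)
      (Set.Icc 0.1 0.6) (Set.Icc 0.1 0.6) := by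
    rintro x ⟨h1, h2⟩
    refine ⟨(hmaps x ⟨h1, by linarith⟩).1, ?_⟩
    have h3 : (0 : ℝ) ≤ 2 - x := by linarith
    have h4 := mul_nonneg (sub_nonneg.2 h2) h3
    dsimp only
    linarith
  refine ⟨hmaps, fun x0 hx0 k => ?_⟩
  obtain ⟨h1, h2⟩ := hinv.iterate k ⟨hx0.1, by linarith [hx0.2]⟩
  exact ⟨⟨h1, by linarith⟩, fun h => by linarith [h.1]⟩
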